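/- arXiv:2305.14636 — 2 statements merged into one kernel-verified Lean document; each statement's English description precedes it below -/
import Mathlib

section
/- Let D ≥ 3 and n ≥ 2 be integers, and let H(D,n) be the Hamming graph whose vertices are the functions from Fin D to Fin n, two vertices being adjacent iff they differ in exactly one coordinate (so the graph distance equals Hamming distance). Then the distance matrix 𝔻 of H(D,n), whose (x,y)-entry is the graph distance d(x,y), has exactly three distinct eigenvalues, one of which is 0. -/
/-- The Hamming graph `H(D,n)`: vertices are functions `Fin D → Fin n`, adjacent iff they
differ in exactly one coordinate. -/
def hammingGraph (D n : ℕ) : SimpleGraph (Fin D → Fin n) where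
  Adj x y := (Finset.univ.filter fun i => x i ≠ y i).card = 1
  symm := by
    constructor
    intro x y h
    simpa [ne_comm] using h
  loopless := by
    constructor
    intro x h
    simp at h

/-- `θ` is an eigenvalue of the real matrix `M`. -/
def IsEigenval {n : Type*} [Fintype n] (M : Matrix n n ℝ) (θ : ℝ) : Prop :=
  ∃ v : n → ℝ, v ≠ 0 ∧ M.mulVec v = θ • v

open Finset

lemma hammingGraph_adj_iff {D n : ℕ} (x y : Fin D → Fin n) :
    (hammingGraph D n).Adj x y ↔ hammingDist x y = 1 := Iff.rfl

lemma hammingDist_le_walk_length {D n : ℕ} {x y : Fin D → Fin n}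
    (p : (hammingGraph D n).Walk x y) : hammingDist x y ≤ p.length := by
  induction p with
  | nil => simp
  | @cons u v w h p ih =>
    have h1 := hammingDist_triangle u v w
    rw [hammingGraph_adj_iff] at h
    rw [SimpleGraph.Walk.length_cons]
    omega

lemma exists_walk_length_eq_hammingDist {D n : ℕ} (x y : Fin D → Fin n) :
    ∃ p : (hammingGraph D n).Walk x y, p.length = hammingDist x y := by
  induction hk : hammingDist x y generalizing x with
  | zero =>
    obtain rfl := hammingDist_eq_zero.1 hk
    exact ⟨.nil, rfl⟩
  | succ k ih =>
    obtain ⟨i, hi⟩ : ∃ i, x i ≠ y i := by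
      by_contra! h
      rw [funext h, hammingDist_self] at hk
      omega
    have hadj : (hammingGraph D n).Adj x (Function.update x i (y i)) := by
      change #{j | x j ≠ Function.update x i (y i) j} = 1
      rw [card_eq_one]
      refine ⟨i, ?_⟩
      ext j
      by_cases hj : j = i
      · subst hj; simpa using hi
      · simp [hj]
    have hdist : hammingDist (Function.update x i (y i)) y = k := by
      have herase : ({j | Function.update x i (y i) j ≠ y j} : Finset (Fin D))
          = ({j | x j ≠ y j} : Finset (Fin D)).erase i := by
        ext j
        by_cases hj : j = i
        · subst hj; simp
        · simp [hj]
      change #{j | Function.update x i (y i) j ≠ y j} = k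
      change #{j | x j ≠ y j} = k + 1 at hk
      rw [herase, card_erase_of_mem (by simpa using hi), hk, Nat.add_sub_cancel]
    obtain ⟨p, hp⟩ := ih _ hdist
    exact ⟨.cons hadj p, by rw [SimpleGraph.Walk.length_cons, hp]⟩

lemma hammingGraph_dist {D n : ℕ} (x y : Fin D → Fin n) :
    (hammingGraph D n).dist x y = hammingDist x y := by
  obtain ⟨p, hp⟩ := exists_walk_length_eq_hammingDist x y
  refine le_antisymm (hp ▸ SimpleGraph.dist_le p) ?_
  obtain ⟨q, hq⟩ := p.reachable.exists_walk_length_eq_dist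
  exact hq ▸ hammingDist_le_walk_length q

/-- The sum of `v` over all vertices whose `i`-th coordinate is `c`. -/
def fiberSum {D n : ℕ} (v : (Fin D → Fin n) → ℝ) (i : Fin D) (c : Fin n) : ℝ :=
  ∑ y, if y i = c then v y else 0

lemma sum_fiberSum {D n : ℕ} (v : (Fin D → Fin n) → ℝ) (i : Fin D) :
    ∑ c, fiberSum v i c = ∑ y, v y := by
  unfold fiberSum
  rw [sum_comm]
  simp

lemma distMatrix_mulVec {D n : ℕ} (v : (Fin D → Fin n) → ℝ) (x : Fin D → Fin n) :
    (Matrix.of fun x y : Fin D → Fin n => ((hammingGraph D n).dist x y : ℝ)).mulVec v x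
      = ∑ i, (∑ y, v y - fiberSum v i (x i)) := by
  simp only [Matrix.mulVec, dotProduct, Matrix.of_apply, hammingGraph_dist, hammingDist,
    fiberSum, ← sum_sub_distrib, card_filter, Nat.cast_sum, sum_mul]
  rw [sum_comm]
  refine sum_congr rfl fun i _ => sum_congr rfl fun y _ => ?_
  by_cases h : x i = y i
  · simp [h]
  · simp [h, Ne.symm h]

/-- A function ignoring coordinate `k` is orthogonal to every mean-zero function of
coordinate `k`. -/
lemma sum_mul_coord_eq_zero {D n : ℕ} (G : (Fin D → Fin n) → ℝ) (g : Fin n → ℝ) (k : Fin D)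
    (hG : ∀ x y, (∀ j, j ≠ k → x j = y j) → G x = G y) (hg : ∑ c, g c = 0) :
    ∑ x, G x * g (x k) = 0 := by
  rw [← (Equiv.funSplitAt k (Fin n)).symm.sum_comp, Fintype.sum_prod_type_right]
  refine sum_eq_zero fun r _ => ?_
  rcases isEmpty_or_nonempty (Fin n) with h | ⟨⟨b⟩⟩
  · simp
  · calc _ = ∑ c, G ((Equiv.funSplitAt k (Fin n)).symm (b, r)) * g c := by
          refine sum_congr rfl fun c _ => ?_
          congr 1
          · refine hG _ _ fun j hj => ?_
            simp [hj]
          · simp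
      _ = 0 := by rw [← mul_sum, hg, mul_zero]

lemma fiberSum_coord_self {D n : ℕ} (g : Fin n → ℝ) (i : Fin D) (c : Fin n) :
    fiberSum (fun x => g (x i)) i c = (n : ℝ) ^ (D - 1) * g c := by
  unfold fiberSum
  rw [← (Equiv.funSplitAt i (Fin n)).symm.sum_comp, Fintype.sum_prod_type_right]
  simp [Fintype.card_subtype_compl]

lemma fiberSum_mul_coord_eq_zero {D n : ℕ} (h : (Fin D → Fin n) → ℝ) (g : Fin n → ℝ)
    {j k : Fin D} (hjk : j ≠ k) (hh : ∀ x y, (∀ l, l ≠ k → x l = y l) → h x = h y)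
    (hg : ∑ c, g c = 0) (c : Fin n) : fiberSum (fun x => h x * g (x k)) j c = 0 := by
  rw [← sum_mul_coord_eq_zero (fun x => if x j = c then h x else 0) g k
    (fun x y hxy => by simp only [hxy j hjk, hh x y hxy]) hg]
  simp [fiberSum, ite_mul]

lemma fiberSum_coord_of_ne {D n : ℕ} (g : Fin n → ℝ) {j k : Fin D} (hjk : j ≠ k)
    (hg : ∑ c, g c = 0) (c : Fin n) : fiberSum (fun x => g (x k)) j c = 0 := by
  simpa using fiberSum_mul_coord_eq_zero (fun _ => 1) g hjk (fun _ _ _ => rfl) hg c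

lemma sum_coord {D n : ℕ} (g : Fin n → ℝ) (i : Fin D) :
    ∑ x : Fin D → Fin n, g (x i) = (n : ℝ) ^ (D - 1) * ∑ c, g c := by
  rw [← sum_fiberSum _ i, mul_sum]
  exact sum_congr rfl fun c _ => fiberSum_coord_self g i c

lemma eigenval_mul_sum {D n : ℕ} {v : (Fin D → Fin n) → ℝ} {η : ℝ}
    (hv : ∀ x, ∑ i, (∑ y, v y - fiberSum v i (x i)) = η * v x) :
    η * ∑ y, v y = D * (n - 1) * (n : ℝ) ^ (D - 1) * ∑ y, v y := by
  calc η * ∑ y, v y = ∑ x : Fin D → Fin n, ∑ i, (∑ y, v y - fiberSum v i (x i)) := by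
        rw [mul_sum]; exact sum_congr rfl fun x _ => (hv x).symm
    _ = ∑ i : Fin D, (n : ℝ) ^ (D - 1) * ∑ c, (∑ y, v y - fiberSum v i c) := by
        rw [sum_comm]
        exact sum_congr rfl fun i _ => sum_coord (fun c => ∑ y, v y - fiberSum v i c) i
    _ = _ := by
        simp only [sum_sub_distrib, sum_fiberSum]
        simp
        ring

lemma eigenval_mul_fiberSum {D n : ℕ} {v : (Fin D → Fin n) → ℝ} {η : ℝ}
    (hv : ∀ x, ∑ i, (∑ y, v y - fiberSum v i (x i)) = η * v x) (hS : ∑ y, v y = 0)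
    (j : Fin D) (c : Fin n) :
    η * fiberSum v j c = -(n : ℝ) ^ (D - 1) * fiberSum v j c := by
  have hexp : η * fiberSum v j c = ∑ i, -fiberSum (fun x => fiberSum v i (x i)) j c := by
    simp only [hS, zero_sub] at hv
    rw [fiberSum, mul_sum]
    simp only [mul_ite, ← hv, mul_zero]
    rw [sum_neg_distrib]
    simp only [fiberSum]
    rw [sum_comm, ← sum_neg_distrib]
    refine sum_congr rfl fun x _ => ?_
    split_ifs <;> simp
  rw [hexp, Fintype.sum_eq_single j, fiberSum_coord_self, neg_mul]
  intro i hi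
  rw [fiberSum_coord_of_ne _ hi.symm (by rw [sum_fiberSum, hS]), neg_zero]

/-- For `D ≥ 3` and `n ≥ 2`, the distance matrix of the Hamming graph `H(D,n)` has
exactly three distinct eigenvalues, one of which is `0`. -/
theorem stmt9 (D n : ℕ) (hD : 3 ≤ D) (hn : 2 ≤ n) :
    ∃ a b : ℝ, a ≠ b ∧ a ≠ 0 ∧ b ≠ 0 ∧
      {η : ℝ | IsEigenval
        (Matrix.of fun x y : Fin D → Fin n => ((hammingGraph D n).dist x y : ℝ)) η}
        = {a, b, 0} := by
  have hn' : (2 : ℝ) ≤ n := by exact_mod_cast hn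
  have hD' : (3 : ℝ) ≤ D := by exact_mod_cast hD
  have hq : 0 < (n : ℝ) ^ (D - 1) := by positivity
  have ha : 0 < (D : ℝ) * (n - 1) * (n : ℝ) ^ (D - 1) :=
    mul_pos (mul_pos (by linarith) (by linarith)) hq
  refine ⟨D * (n - 1) * (n : ℝ) ^ (D - 1), -(n : ℝ) ^ (D - 1), by linarith, ha.ne',
    by linarith, ?_⟩
  ext η
  simp only [Set.mem_ofPred_eq, Set.mem_insert_iff, Set.mem_singleton_iff, IsEigenval,
    funext_iff, distMatrix_mulVec, Pi.smul_apply, smul_eq_mul]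
  constructor
  · rintro ⟨v, hv0, hv⟩
    by_contra! hη
    obtain ⟨hηa, hηb, hη0⟩ := hη
    have hS : ∑ y, v y = 0 := by
      by_contra hS
      exact hηa (mul_right_cancel₀ hS (eigenval_mul_sum hv))
    have hf : ∀ j c, fiberSum v j c = 0 := fun j c => by
      by_contra hf
      exact hηb (mul_right_cancel₀ hf (eigenval_mul_fiberSum hv hS j c))
    refine hv0 (funext fun x => ?_)
    have hx := hv x
    simp only [hS, hf, sub_zero, sum_const_zero] at hx
    exact (mul_eq_zero.1 hx.symm).resolve_left hη0
  · let c₀ : Fin n := ⟨0, by omega⟩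
    let c₁ : Fin n := ⟨1, by omega⟩
    let i₀ : Fin D := ⟨0, by omega⟩
    let i₁ : Fin D := ⟨1, by omega⟩
    have hi : i₀ ≠ i₁ := by simp [i₀, i₁]
    let g : Fin n → ℝ := fun c => (if c = c₀ then 1 else 0) - (if c = c₁ then 1 else 0)
    have hg : ∑ c, g c = 0 := by simp [g]
    have hg0 : g c₀ = 1 := by simp [g, c₀, c₁]
    rintro (rfl | rfl | rfl)
    · refine ⟨fun _ => 1, fun h => one_ne_zero (congrFun h fun _ => c₀), fun x => ?_⟩
      have h1 := sum_coord (fun _ : Fin n => (1 : ℝ)) i₀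
      have h2 : ∀ i c, fiberSum (fun _ : Fin D → Fin n => (1 : ℝ)) i c = n ^ (D - 1) :=
        fun i c => by simpa using fiberSum_coord_self (fun _ : Fin n => (1 : ℝ)) i c
      simp only [h1, h2]
      simp
      ring
    · refine ⟨fun x => g (x i₀), fun h => ?_, fun x => ?_⟩
      · have := congrFun h fun _ => c₀
        simp [hg0] at this
      · rw [sum_coord, hg, mul_zero, Fintype.sum_eq_single i₀, fiberSum_coord_self]
        · ring
        · intro i hi
          rw [fiberSum_coord_of_ne g hi hg, sub_zero]
    · refine ⟨fun x => g (x i₀) * g (x i₁), fun h => ?_, fun x => ?_⟩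
      · have := congrFun h fun _ => c₀
        simp [hg0] at this
      · have hf : ∀ j c, fiberSum (fun x => g (x i₀) * g (x i₁)) j c = 0 := by
          intro j c
          by_cases hj : j = i₁
          · simpa only [mul_comm] using
              fiberSum_mul_coord_eq_zero (fun x => g (x i₁)) g (hj ▸ hi.symm : j ≠ i₀)
                (fun x y hxy => by simp only [hxy i₁ hi.symm]) hg c
          · exact fiberSum_mul_coord_eq_zero (fun x => g (x i₀)) g hj
              (fun x y hxy => by simp only [hxy i₀ hi]) hg c
        rw [← sum_fiberSum _ i₀]
        simp [hf]
end

section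
/- Let n and t be integers with n ≥ 2t and t ≥ 3, and let J(n,t) be the Johnson graph whose vertices are the t-element subsets of an n-element set, two subsets A, B being adjacent iff |A ∩ B| = t − 1. Then the distance matrix 𝔻 of J(n,t), whose (A,B)-entry is the graph distance d(A,B), has exactly three distinct eigenvalues, one of which is 0. -/
/-- The Johnson graph `J(n,t)`: vertices are the `t`-element subsets of an `n`-element
set, two distinct subsets being adjacent iff their intersection has `t - 1` elements. -/
def johnsonGraph (n t : ℕ) : SimpleGraph {A : Finset (Fin n) // A.card = t} where
  Adj A B := A ≠ B ∧ (A.1 ∩ B.1).card = t - 1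
  symm := by
    refine ⟨?_⟩
    intro A B h
    exact ⟨h.1.symm, by rw [Finset.inter_comm]; exact h.2⟩
  loopless := by
    refine ⟨?_⟩
    intro A h
    exact h.1 rfl

namespace johnsonGraph

open Finset

variable {n t : ℕ}

/-- Along a walk, the intersection with a fixed vertex grows by at most one per step. -/
lemma le_card_inter_add_length {A B : {A : Finset (Fin n) // A.card = t}}
    (p : (johnsonGraph n t).Walk A B) : t ≤ (A.1 ∩ B.1).card + p.length := by
  induction p with
  | nil => rename_i A; simp [A.2]
  | @cons A C B h p ih =>
    have hsub : C.1 ∩ B.1 ⊆ (A.1 ∩ B.1) ∪ (C.1 \ A.1) := by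
      intro x; simp only [mem_inter, mem_union, mem_sdiff]; tauto
    have h1 := (card_le_card hsub).trans (card_union_le _ _)
    have h2 := card_sdiff_add_card_inter C.1 A.1
    have h3 : (A.1 ∩ C.1).card = t - 1 := h.2
    rw [inter_comm] at h3
    have h4 := C.2
    simp only [SimpleGraph.Walk.length_cons]
    omega

lemma exists_walk (A B : {A : Finset (Fin n) // A.card = t}) (k : ℕ)
    (hk : (A.1 ∩ B.1).card + k = t) :
    ∃ p : (johnsonGraph n t).Walk A B, p.length = k := by
  induction k generalizing A with
  | zero =>
    have h1 : A.1 ∩ B.1 = A.1 := eq_of_subset_of_card_le inter_subset_left (by rw [A.2]; omega)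
    have h2 : A.1 ∩ B.1 = B.1 := eq_of_subset_of_card_le inter_subset_right (by rw [B.2]; omega)
    obtain rfl : A = B := Subtype.ext (h1.symm.trans h2)
    exact ⟨.nil, rfl⟩
  | succ k ih =>
    have hA := card_sdiff_add_card_inter A.1 B.1
    have hB := card_sdiff_add_card_inter B.1 A.1
    rw [inter_comm, B.2] at hB
    rw [A.2] at hA
    obtain ⟨x, hx⟩ := card_pos.1 (show 0 < (A.1 \ B.1).card by omega)
    obtain ⟨y, hy⟩ := card_pos.1 (show 0 < (B.1 \ A.1).card by omega)
    rw [mem_sdiff] at hx hy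
    have hye : y ∉ A.1.erase x := fun h => hy.2 (mem_of_mem_erase h)
    have hce : (A.1.erase x).card = t - 1 := by rw [card_erase_of_mem hx.1, A.2]
    let C : {A : Finset (Fin n) // A.card = t} :=
      ⟨insert y (A.1.erase x), by rw [card_insert_of_notMem hye, hce]; omega⟩
    have hadj : (johnsonGraph n t).Adj A C := by
      refine ⟨fun h => hy.2 (by rw [h]; exact mem_insert_self _ _), ?_⟩
      rw [← hce]
      congr 1
      change A.1 ∩ insert y (A.1.erase x) = _
      rw [inter_insert_of_notMem hy.2, inter_eq_right]
      exact erase_subset _ _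
    have hC : C.1 ∩ B.1 = insert y (A.1 ∩ B.1) := by
      change insert y (A.1.erase x) ∩ B.1 = _
      rw [insert_inter_of_mem hy.1, erase_inter, erase_eq_of_notMem]
      simp [hx.2]
    have hCcard : (C.1 ∩ B.1).card = (A.1 ∩ B.1).card + 1 := by
      rw [hC, card_insert_of_notMem (by simp [hy.2])]
    obtain ⟨p, hp⟩ := ih C (by omega)
    exact ⟨.cons hadj p, by simp [hp]⟩

lemma dist_add_card_inter (A B : {A : Finset (Fin n) // A.card = t}) :
    (johnsonGraph n t).dist A B + (A.1 ∩ B.1).card = t := by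
  have hle : (A.1 ∩ B.1).card ≤ t := (card_le_card inter_subset_left).trans A.2.le
  obtain ⟨p, hp⟩ := exists_walk A B (t - (A.1 ∩ B.1).card) (by omega)
  have h1 := SimpleGraph.dist_le p
  obtain ⟨q, hq⟩ := p.reachable.exists_walk_length_eq_dist
  have h2 := le_card_inter_add_length q
  omega

/-- The number of `t`-subsets containing a given set. -/
lemma card_filter_subset (S : Finset (Fin n)) (hS : S.card ≤ t) :
    (univ.filter fun A : {A : Finset (Fin n) // A.card = t} => S ⊆ A.1).card
      = (n - S.card).choose (t - S.card) := by
  have hc : (n - S.card) = (Sᶜ).card := by rw [card_compl, Fintype.card_fin]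
  rw [hc, ← card_powersetCard]
  refine card_bij (fun A _ => A.1 \ S) ?_ ?_ ?_
  · intro A hA
    rw [mem_filter] at hA
    rw [mem_powersetCard, card_sdiff_of_subset hA.2, A.2]
    exact ⟨fun x hx => mem_compl.2 (mem_sdiff.1 hx).2, rfl⟩
  · intro A hA B hB h
    rw [mem_filter] at hA hB
    apply Subtype.ext
    rw [← sdiff_union_of_subset hA.2, ← sdiff_union_of_subset hB.2, h]
  · intro T hT
    rw [mem_powersetCard] at hT
    have hd : Disjoint T S := subset_compl_iff_disjoint_right.1 hT.1
    refine ⟨⟨T ∪ S, ?_⟩, ?_, ?_⟩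
    · rw [card_union_of_disjoint hd]; omega
    · simp
    · simpa [union_sdiff_right] using hd.sdiff_eq_left

/-- The sum of `v` over the `t`-subsets containing the point `x`. -/
noncomputable def pointSum (v : {A : Finset (Fin n) // A.card = t} → ℝ) (x : Fin n) : ℝ :=
  ∑ A, if x ∈ A.1 then v A else 0

lemma sum_pointSum (v : {A : Finset (Fin n) // A.card = t} → ℝ) :
    ∑ x, pointSum v x = t * ∑ A, v A := by
  simp only [pointSum]
  rw [sum_comm, mul_sum]
  refine sum_congr rfl fun A _ => ?_
  simp [A.2]

/-- The number of `t`-subsets containing `x` and `y`. -/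
lemma sum_ite_mem_mem (hn : 2 ≤ n) (ht : 2 ≤ t) (x y : Fin n) :
    (∑ A : {A : Finset (Fin n) // A.card = t}, if x ∈ A.1 then (if y ∈ A.1 then (1 : ℝ) else 0)
      else 0) = (n - 2).choose (t - 2) + if x = y then ((n - 2).choose (t - 1) : ℝ) else 0 := by
  have h := card_filter_subset (t := t) ({x, y} : Finset (Fin n)) (card_le_two.trans ht)
  have h' : (∑ A : {A : Finset (Fin n) // A.card = t}, if x ∈ A.1 then
      (if y ∈ A.1 then (1 : ℝ) else 0) else 0) =
      (univ.filter fun A : {A : Finset (Fin n) // A.card = t} => {x, y} ⊆ A.1).card := by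
    simp [insert_subset_iff, ite_and, ← sum_boole]
  rw [h', h]
  by_cases hxy : x = y
  · subst hxy
    obtain ⟨s, rfl⟩ := Nat.exists_eq_add_of_le' ht
    obtain ⟨m, rfl⟩ := Nat.exists_eq_add_of_le' hn
    simp [Nat.choose_succ_succ]
  · simp [hxy, card_pair hxy]

/-- The sum over `A` of the values of `w` on the points of `A`, restricted to `x ∈ A`. -/
lemma pointSum_sum (hn : 2 ≤ n) (ht : 2 ≤ t) (w : Fin n → ℝ) (x : Fin n) :
    pointSum (t := t) (fun A => ∑ y ∈ A.1, w y) x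
      = (n - 2).choose (t - 2) * ∑ y, w y + (n - 2).choose (t - 1) * w x := by
  have h : pointSum (t := t) (fun A => ∑ y ∈ A.1, w y) x =
      ∑ y, (∑ A : {A : Finset (Fin n) // A.card = t}, if x ∈ A.1 then
        (if y ∈ A.1 then (1 : ℝ) else 0) else 0) * w y := by
    simp only [pointSum, sum_mul]
    rw [sum_comm]
    refine sum_congr rfl fun A _ => ?_
    split_ifs <;> simp
  rw [h]
  simp only [sum_ite_mem_mem hn ht, add_mul, sum_add_distrib, mul_sum]
  simp

/-- Each point lies in `(n - 1).choose (t - 1)` of the `t`-subsets. -/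
lemma sum_sum_mem (ht : 1 ≤ t) (w : Fin n → ℝ) :
    ∑ A : {A : Finset (Fin n) // A.card = t}, ∑ y ∈ A.1, w y
      = (n - 1).choose (t - 1) * ∑ y, w y := by
  have h : ∀ A : {A : Finset (Fin n) // A.card = t},
      ∑ y ∈ A.1, w y = ∑ y, if y ∈ A.1 then w y else 0 := fun A => by simp
  simp only [h]
  rw [sum_comm, mul_sum]
  refine sum_congr rfl fun y _ => ?_
  have hy := card_filter_subset (t := t) ({y} : Finset (Fin n)) (by simpa using ht)
  simp only [singleton_subset_iff, card_singleton] at hy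
  rw [← sum_filter, sum_const, hy, nsmul_eq_mul]

variable (n t) in
/-- The distance matrix of the Johnson graph. -/
noncomputable abbrev distMatrix : Matrix {A : Finset (Fin n) // A.card = t}
    {A : Finset (Fin n) // A.card = t} ℝ :=
  Matrix.of fun A B => ((johnsonGraph n t).dist A B : ℝ)

lemma distMatrix_mulVec (v : {A : Finset (Fin n) // A.card = t} → ℝ)
    (A : {A : Finset (Fin n) // A.card = t}) :
    (distMatrix n t).mulVec v A = t * ∑ B, v B - ∑ y ∈ A.1, pointSum v y := by
  simp only [pointSum, Matrix.mulVec, dotProduct]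
  rw [sum_comm, mul_sum, ← sum_sub_distrib]
  refine sum_congr rfl fun B _ => ?_
  have h : ((johnsonGraph n t).dist A B : ℝ) + (A.1 ∩ B.1).card = t := by
    exact_mod_cast dist_add_card_inter A B
  rw [← sum_filter, filter_mem_eq_inter, sum_const, nsmul_eq_mul, ← sub_mul, ← h, add_sub_cancel_right]
  rfl

lemma sum_distMatrix_mulVec (ht : 1 ≤ t) (v : {A : Finset (Fin n) // A.card = t} → ℝ) :
    ∑ A, (distMatrix n t).mulVec v A
      = t * (n.choose t - (n - 1).choose (t - 1)) * ∑ A, v A := by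
  simp only [distMatrix_mulVec, sum_sub_distrib, sum_sum_mem ht, sum_pointSum]
  have hcard : Fintype.card {A : Finset (Fin n) // A.card = t} = n.choose t := by
    simp
  simp only [sum_const, card_univ, hcard, nsmul_eq_mul]
  ring

lemma pointSum_distMatrix_mulVec (hn : 2 ≤ n) (ht : 2 ≤ t)
    (v : {A : Finset (Fin n) // A.card = t} → ℝ) (hv : ∑ A, v A = 0) (x : Fin n) :
    pointSum ((distMatrix n t).mulVec v) x = -((n - 2).choose (t - 1) : ℝ) * pointSum v x := by
  have h : (distMatrix n t).mulVec v = fun A => ∑ y ∈ A.1, (-pointSum v y) := by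
    ext A; simp [distMatrix_mulVec, hv]
  rw [h, pointSum_sum hn ht, sum_neg_distrib, sum_pointSum, hv]
  ring

lemma pointSum_smul (c : ℝ) (v : {A : Finset (Fin n) // A.card = t} → ℝ) (x : Fin n) :
    pointSum (c • v) x = c * pointSum v x := by
  simp [pointSum, mul_sum]

lemma eq_of_isEigenval (hn : 2 ≤ n) (ht : 2 ≤ t) {η : ℝ} (h : IsEigenval (distMatrix n t) η) :
    η = t * (n.choose t - (n - 1).choose (t - 1)) ∨ η = -((n - 2).choose (t - 1) : ℝ) ∨ η = 0 := by
  obtain ⟨v, hv, hη⟩ := h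
  by_cases hs : ∑ A, v A = 0
  · by_cases hw : ∀ x, pointSum v x = 0
    · obtain ⟨A, hA⟩ := Function.ne_iff.1 hv
      have h := congrFun hη A
      rw [distMatrix_mulVec, hs] at h
      simp only [hw, sum_const_zero, mul_zero, sub_zero, Pi.smul_apply, smul_eq_mul] at h
      exact .inr (.inr ((mul_eq_zero.1 h.symm).resolve_right hA))
    · push Not at hw
      obtain ⟨x, hx⟩ := hw
      have h := pointSum_distMatrix_mulVec hn ht v hs x
      rw [hη, pointSum_smul] at h
      exact .inr (.inl (mul_right_cancel₀ hx h))
  · have h := sum_distMatrix_mulVec (by omega) v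
    rw [hη] at h
    simp only [Pi.smul_apply, smul_eq_mul, ← mul_sum] at h
    exact .inl (mul_right_cancel₀ hs h)

lemma isEigenval_rowSum (ht : 1 ≤ t) (hn : t ≤ n) :
    IsEigenval (distMatrix n t) (t * (n.choose t - (n - 1).choose (t - 1))) := by
  have hcard : Fintype.card {A : Finset (Fin n) // A.card = t} = n.choose t := by simp
  obtain ⟨A₀⟩ : Nonempty {A : Finset (Fin n) // A.card = t} :=
    Fintype.card_pos_iff.1 (by rw [hcard]; exact Nat.choose_pos hn)
  refine ⟨1, Function.ne_iff.2 ⟨A₀, one_ne_zero⟩, ?_⟩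
  have hp : ∀ y, pointSum (n := n) (t := t) 1 y = (n - 1).choose (t - 1) := fun y => by
    have hy := card_filter_subset (t := t) ({y} : Finset (Fin n)) (by simpa using ht)
    simp only [singleton_subset_iff, card_singleton] at hy
    simp [pointSum, hy]
  ext A
  rw [distMatrix_mulVec]
  simp only [hp, sum_const, A.2, Pi.one_apply, card_univ, hcard, nsmul_eq_mul, Pi.smul_apply,
    smul_eq_mul]
  ring

lemma isEigenval_neg_choose (ht : 2 ≤ t) (hn : t < n) :
    IsEigenval (distMatrix n t) (-((n - 2).choose (t - 1) : ℝ)) := by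
  let x : Fin n := ⟨0, by omega⟩
  let y : Fin n := ⟨1, by omega⟩
  have hxy : x ≠ y := by simp [x, y]
  let u : Fin n → ℝ := Pi.single x 1 - Pi.single y 1
  have hu : ∑ z, u z = 0 := by simp [u]
  have hp := pointSum_sum (t := t) (by omega) ht u
  simp only [hu, mul_zero, zero_add] at hp
  refine ⟨fun A => ∑ z ∈ A.1, u z, fun h => ?_, ?_⟩
  · have hx := hp x
    rw [h] at hx
    have hpos : (0 : ℝ) < (n - 2).choose (t - 1) := by
      exact_mod_cast Nat.choose_pos (by omega)
    simp [pointSum, u, hxy, hpos.ne] at hx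
  · ext A
    rw [distMatrix_mulVec, sum_sum_mem (by omega), hu]
    simp [hp, mul_sum]

lemma isEigenval_zero (hn : n < n.choose t) : IsEigenval (distMatrix n t) 0 := by
  let L : ({A : Finset (Fin n) // A.card = t} → ℝ) →ₗ[ℝ] (Fin n → ℝ) :=
    Matrix.mulVecLin (Matrix.of fun x A => if x ∈ A.1 then 1 else 0)
  have hker : LinearMap.ker L ≠ ⊥ := LinearMap.ker_ne_bot_of_finrank_lt (by simpa using hn)
  obtain ⟨v, hv, hv0⟩ := Submodule.exists_mem_ne_zero_of_ne_bot hker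
  have hw : ∀ x, pointSum v x = 0 := fun x => by
    simpa [L, pointSum, Matrix.mulVec, dotProduct] using congrFun (LinearMap.mem_ker.1 hv) x
  have hs := sum_pointSum v
  simp only [hw, sum_const_zero] at hs
  refine ⟨v, hv0, ?_⟩
  ext A
  simp [distMatrix_mulVec, hw, ← hs]

end johnsonGraph

lemma Nat.lt_choose_of_two_mul_le {n t : ℕ} (ht : 3 ≤ t) (hn : 2 * t ≤ n) : n < n.choose t := by
  have h2 : n < n.choose 2 := by
    rw [Nat.choose_two_right, ← Nat.succ_le_iff, Nat.le_div_iff_mul_le (by norm_num)]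
    obtain ⟨m, rfl⟩ := Nat.exists_eq_add_of_le' (show 6 ≤ n by omega)
    rw [show m + 6 - 1 = m + 5 by omega]
    nlinarith
  induction t, (show 2 ≤ t by omega) using Nat.le_induction with
  | base => exact h2
  | succ t ht' ih =>
    have h := Nat.choose_le_succ_of_lt_half_left (show t < n / 2 by omega)
    rcases eq_or_lt_of_le ht' with rfl | h3
    · exact h2.trans_le h
    · exact (ih h3 (by omega)).trans_le h

/-- For `n ≥ 2t` and `t ≥ 3`, the distance matrix of the Johnson graph `J(n,t)` has
exactly three distinct eigenvalues, one of which is `0`. -/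
theorem stmt10 (n t : ℕ) (ht : 3 ≤ t) (hn : 2 * t ≤ n) :
    ∃ a b : ℝ, a ≠ b ∧ a ≠ 0 ∧ b ≠ 0 ∧
      {η : ℝ | IsEigenval
        (Matrix.of fun A B : {A : Finset (Fin n) // A.card = t} =>
          ((johnsonGraph n t).dist A B : ℝ)) η}
        = {a, b, 0} := by
  have hpascal := Nat.choose_eq_choose_pred_add (n := n) (k := t) (by omega) (by omega)
  have hpos : 0 < (n - 1).choose t := Nat.choose_pos (by omega)
  have hb : (0 : ℝ) < (n - 2).choose (t - 1) := by exact_mod_cast Nat.choose_pos (by omega)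
  have ha : (0 : ℝ) < t * (n.choose t - (n - 1).choose (t - 1)) := by
    have h1 : ((n - 1).choose (t - 1) : ℝ) < n.choose t := by exact_mod_cast (by omega)
    have h2 : (0 : ℝ) < t := by exact_mod_cast (by omega)
    exact mul_pos h2 (sub_pos.2 h1)
  refine ⟨t * (n.choose t - (n - 1).choose (t - 1)), -((n - 2).choose (t - 1) : ℝ),
    by linarith, ha.ne', by linarith, Set.ext fun η => ⟨fun h => ?_, ?_⟩⟩
  · exact johnsonGraph.eq_of_isEigenval (by omega) (by omega) h
  · rintro (rfl | rfl | rfl)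
    · exact johnsonGraph.isEigenval_rowSum (by omega) (by omega)
    · exact johnsonGraph.isEigenval_neg_choose (by omega) (by omega)
    · exact johnsonGraph.isEigenval_zero (Nat.lt_choose_of_two_mul_le ht hn)
end
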